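/- Let p ≥ 1 and m = k·2^z with k odd and z ≥ 1. Let β = ⌈z/p⌉ − 1 and let c ∈ [1, z − βp − 1]. Then for all n ∈ ℕ and all e < 2^{pn}: [m divides 2^{pn}·k·2^{z−βp−1} + e and s((2^{pn}·k·2^{z−βp−1} + e)/m) = 1] if and only if [m divides 2^{pn}·k·2^{z−(βp+c)−1} + e and s((2^{pn}·k·2^{z−(βp+c)−1} + e)/m) = 1]. [This shows that all states of the last class Γ_{⌈z/p⌉−1} of the projected automaton are indistinguishable.] -/

import Mathlib

/-- The parity (in `ZMod 2`) of the number of 1s in the binary expansion of `n`. -/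
def sTM (n : ℕ) : ZMod 2 := ((Nat.digits 2 n).count 1 : ZMod 2)

theorem sTM_two_mul (n : ℕ) : sTM (2 * n) = sTM n := by
  rcases Nat.eq_zero_or_pos n with h | h
  · subst h; simp
  · unfold sTM
    rw [Nat.digits_def' (by norm_num) (by omega)]
    simp

theorem sTM_two_mul_add_one (n : ℕ) : sTM (2 * n + 1) = 1 + sTM n := by
  unfold sTM
  rw [Nat.digits_def' (by norm_num) (by omega)]
  have h1 : (2 * n + 1) % 2 = 1 := by omega
  have h2 : (2 * n + 1) / 2 = n := by omega
  rw [h1, h2, List.count_cons_self]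
  push_cast
  ring

theorem sTM_pow_add (t : ℕ) : ∀ q : ℕ, q < 2 ^ t → sTM (2 ^ t + q) = 1 + sTM q := by
  induction t with
  | zero =>
    intro q hq
    have : q = 0 := by simpa using hq
    subst this
    simp [sTM]
  | succ t ih =>
    intro q hq
    rw [pow_succ] at hq ⊢
    rcases Nat.even_or_odd' q with ⟨r, hr | hr⟩
    · have e : 2 ^ t * 2 + q = 2 * (2 ^ t + r) := by omega
      rw [e, hr, sTM_two_mul, sTM_two_mul, ih r (by omega)]
    · have e : 2 ^ t * 2 + q = 2 * (2 ^ t + r) + 1 := by omega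
      rw [e, hr, sTM_two_mul_add_one, sTM_two_mul_add_one, ih r (by omega)]

theorem side_false (k z N a e : ℕ) (hk : Odd k) (he : e < 2 ^ N) (h : N + a < z) :
    ¬ (k * 2 ^ z ∣ 2 ^ N * (k * 2 ^ a) + e) := by
  intro hd
  have hd1 : 2 ^ z ∣ 2 ^ N * (k * 2 ^ a) + e := (Dvd.intro_left k rfl).trans hd
  have hN : 2 ^ N ∣ e := by
    have h1 : 2 ^ N ∣ 2 ^ N * (k * 2 ^ a) + e := (pow_dvd_pow 2 (by omega)).trans hd1
    exact (Nat.dvd_add_right (Dvd.intro _ rfl)).1 h1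
  have e0 : e = 0 := Nat.eq_zero_of_dvd_of_lt hN he
  subst e0
  have h2 : 2 ^ (N + a) * 2 ∣ 2 ^ (N + a) * k := by
    have h3 := (pow_dvd_pow 2 (show N + a + 1 ≤ z by omega)).trans hd1
    rw [pow_succ] at h3
    have h5 : 2 ^ N * (k * 2 ^ a) + 0 = 2 ^ (N + a) * k := by
      rw [pow_add, add_zero]; ring
    rwa [h5] at h3
  have h4 : 2 ∣ k := Nat.dvd_of_mul_dvd_mul_left (by positivity) h2
  rcases hk with ⟨r, hr⟩
  omega

theorem side_true (k z N a e : ℕ) (hk : Odd k) (he : e < 2 ^ N) (h : z ≤ N) :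
    (k * 2 ^ z ∣ 2 ^ N * (k * 2 ^ a) + e ∧ sTM ((2 ^ N * (k * 2 ^ a) + e) / (k * 2 ^ z)) = 1) ↔
    (k * 2 ^ z ∣ e ∧ 1 + sTM (e / (k * 2 ^ z)) = 1) := by
  have hkp : 0 < k := hk.pos
  have hmp : 0 < k * 2 ^ z := by positivity
  have hpow : 2 ^ N * (k * 2 ^ a) = (k * 2 ^ z) * 2 ^ (N - z + a) := by
    obtain ⟨d, rfl⟩ := Nat.exists_eq_add_of_le h
    rw [Nat.add_sub_cancel_left]
    ring
  rw [hpow, Nat.dvd_add_right (Dvd.intro _ rfl)]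
  refine and_congr_right fun hd => ?_
  rw [Nat.mul_add_div hmp, sTM_pow_add]
  rw [Nat.div_lt_iff_lt_mul hmp]
  refine he.trans_le ?_
  calc 2 ^ N = 2 ^ (N - z) * (1 * 2 ^ z) := by rw [one_mul, ← pow_add]; congr 1; omega
    _ ≤ 2 ^ (N - z + a) * (k * 2 ^ z) := by
      gcongr
      · norm_num
      · omega
      · omega

theorem gamma_last_indistinguishable (p m k z : ℕ) (hp : 1 ≤ p) (hkodd : Odd k) (hz : 1 ≤ z)
    (hm : m = k * 2 ^ z)
    (β : ℕ) (hβ : β = (z + p - 1) / p - 1)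
    (c : ℕ) (hc1 : 1 ≤ c) (hc2 : c + β * p + 1 ≤ z) :
    ∀ n e : ℕ, e < 2 ^ (p * n) →
      ((m ∣ 2 ^ (p * n) * (k * 2 ^ (z - β * p - 1)) + e ∧
          sTM ((2 ^ (p * n) * (k * 2 ^ (z - β * p - 1)) + e) / m) = 1) ↔
       (m ∣ 2 ^ (p * n) * (k * 2 ^ (z - (β * p + c) - 1)) + e ∧
          sTM ((2 ^ (p * n) * (k * 2 ^ (z - (β * p + c) - 1)) + e) / m) = 1)) := by
  intro n e he
  subst hm
  have hz2 : z ≤ (β + 1) * p := by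
    have h1 : 1 ≤ (z + p - 1) / p := by
      rw [Nat.le_div_iff_mul_le (by omega)]; omega
    have h2 : (z + p - 1) / p < β + 1 + 1 := by omega
    rw [Nat.div_lt_iff_lt_mul (by omega)] at h2
    have h3 : (β + 1 + 1) * p = (β + 1) * p + p := by ring
    omega
  rcases Nat.lt_or_ge β n with hn | hn
  · have hN : z ≤ p * n := by
      calc z ≤ (β + 1) * p := hz2
        _ ≤ n * p := Nat.mul_le_mul_right _ hn
        _ = p * n := mul_comm _ _
    rw [side_true _ _ _ _ _ hkodd he hN, side_true _ _ _ _ _ hkodd he hN]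
  · have hN : p * n ≤ β * p := by
      rw [mul_comm p n]; exact Nat.mul_le_mul_right _ hn
    exact iff_of_false (fun h => side_false _ _ _ _ _ hkodd he (by omega) h.1)
      (fun h => side_false _ _ _ _ _ hkodd he (by omega) h.1)
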